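/- The profile Φ satisfies the equation σ (𝓛Φ)(x) = N Φ(x) + x · ∇Φ(x) for every x ∈ ℝ^N. -/

import Mathlib

open MeasureTheory Metric Real Set
open scoped InnerProductSpace ENNReal

noncomputable section

/-- `ℝ^N` as a Euclidean space. -/
abbrev Eu (N : ℕ) := EuclideanSpace ℝ (Fin N)

/-- The unit sphere `𝕊^{N-1} ⊂ ℝ^N`. -/
abbrev Sph (N : ℕ) := Metric.sphere (0 : Eu N) 1

/-- The surface measure `dθ` on the unit sphere. -/
def sphMeas (N : ℕ) : Measure (Sph N) := (volume : Measure (Eu N)).toSphere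

/-- The stable operator `𝓛` associated to the order `σ` and the spectral measure `μ`:
`𝓛u(x) = ∫_{𝕊^{N−1}} ∫_0^∞ (u(x) − (u(x+rθ)+u(x−rθ))/2) r^{−1−σ} dr dμ(θ)`. -/
def Lop (N : ℕ) (σ : ℝ) (μ : Measure (Sph N)) (u : Eu N → ℝ) (x : Eu N) : ℝ :=
  ∫ θ : Sph N, (∫ r in Ioi (0 : ℝ),
    (u x - (u (x + r • (θ : Eu N)) + u (x - r • (θ : Eu N))) / 2) * r ^ (-1 - σ)) ∂μ

/-- The ellipticity (non-degeneracy) condition on the spectral measure. -/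
def Elliptic (N : ℕ) (σ : ℝ) (μ : Measure (Sph N)) (lam : ℝ) : Prop :=
  ∀ ζ : Sph N, lam ≤ ∫ θ : Sph N, |⟪(ζ : Eu N), (θ : Eu N)⟫_ℝ| ^ σ ∂μ

/-- The weight `ρ(x) = (1+|x|)^{−(N+σ)}`. -/
def wt (N : ℕ) (σ : ℝ) (x : Eu N) : ℝ := (1 + ‖x‖) ^ (-((N : ℝ) + σ))

/-- `u ∈ L¹_loc([0,∞); L_ρ)`. -/
def L1locRho (N : ℕ) (σ : ℝ) (u : Eu N → ℝ → ℝ) : Prop :=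
  ∀ T > 0, IntegrableOn (fun q : Eu N × ℝ => u q.1 q.2 * wt N σ q.1)
    ((univ : Set (Eu N)) ×ˢ Ioo (0 : ℝ) T) volume

/-- Very weak solution of `∂ₜu + 𝓛u = 𝓛f` in `Q = ℝ^N × (0,∞)` with initial datum `u₀`:
`∫_Q u ∂ₜζ + ∫ u₀ ζ(·,0) = ∫_Q (u−f) 𝓛ζ` for all `ζ ∈ C_c^∞(ℝ^N × [0,∞))`. -/
def IsVeryWeakSol (N : ℕ) (σ : ℝ) (μ : Measure (Sph N)) (f : Eu N → ℝ → ℝ)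
    (u0 : Eu N → ℝ) (u : Eu N → ℝ → ℝ) : Prop :=
  L1locRho N σ u ∧
  ∀ ζ : Eu N × ℝ → ℝ, ContDiff ℝ (⊤ : ℕ∞) ζ → HasCompactSupport ζ →
    (∫ q : Eu N × ℝ in (univ : Set (Eu N)) ×ˢ Ioi (0 : ℝ),
        u q.1 q.2 * deriv (fun s => ζ (q.1, s)) q.2)
      + (∫ x : Eu N, u0 x * ζ (x, 0))
    = ∫ q : Eu N × ℝ in (univ : Set (Eu N)) ×ˢ Ioi (0 : ℝ),
        (u q.1 q.2 - f q.1 q.2) * Lop N σ μ (fun y => ζ (y, q.2)) q.1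

/-- The multiplier `m(ξ)` of `𝓛`. -/
def symb (N : ℕ) (σ : ℝ) (μ : Measure (Sph N)) (ξ : Eu N) : ℝ :=
  ∫ θ : Sph N, (∫ r in Ioi (0 : ℝ),
    (1 - Real.cos (r * ⟪ξ, (θ : Eu N)⟫_ℝ)) * r ^ (-1 - σ)) ∂μ

/-- `𝓛^kΦ`, the inverse Fourier transform of `m(ξ)^k e^{−m(ξ)}`; `k = 0` gives the
heat-kernel profile `Φ`. -/
def LkPhi (N : ℕ) (σ : ℝ) (μ : Measure (Sph N)) (k : ℕ) (x : Eu N) : ℝ :=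
  (2 * π) ^ (-(N : ℝ)) *
    (∫ ξ : Eu N, ((symb N σ μ ξ ^ k * Real.exp (-symb N σ μ ξ) : ℝ) : ℂ) *
        Complex.exp (Complex.I * (⟪x, ξ⟫_ℝ : ℂ))).re

/-- The heat kernel `P(x,t) = t^{−N/σ} Φ(x t^{−1/σ})`. -/
def heatK (N : ℕ) (σ : ℝ) (μ : Measure (Sph N)) (x : Eu N) (t : ℝ) : ℝ :=
  t ^ (-(N : ℝ) / σ) * LkPhi N σ μ 0 ((t ^ (-(1 : ℝ) / σ)) • x)

/-- `𝓛P(x,t) = t^{−N/σ−1} (𝓛Φ)(x t^{−1/σ})`. -/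
def LheatK (N : ℕ) (σ : ℝ) (μ : Measure (Sph N)) (x : Eu N) (t : ℝ) : ℝ :=
  t ^ (-(N : ℝ) / σ - 1) * LkPhi N σ μ 1 ((t ^ (-(1 : ℝ) / σ)) • x)

/-- The σ-parabolic norm `|(x,t)|_σ = (|x|² + |t|^{2/σ})^{1/2}`. -/
def pnorm (N : ℕ) (σ : ℝ) (x : Eu N) (t : ℝ) : ℝ := Real.sqrt (‖x‖ ^ 2 + |t| ^ (2 / σ))

/-- `f ∈ C^α_σ(Q)` with Hölder constant `c`. -/
def HolderSigma (N : ℕ) (σ α c : ℝ) (f : Eu N → ℝ → ℝ) : Prop :=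
  ∀ x t x' t', 0 < t → 0 < t' → |f x t - f x' t'| ≤ c * pnorm N σ (x - x') (t - t') ^ α


theorem integrableOn_one_sub_cos_mul_rpow {σ : ℝ} (hσ0 : 0 < σ) (hσ2 : σ < 2) :
    IntegrableOn (fun r : ℝ => (1 - Real.cos r) * r ^ (-1 - σ)) (Ioi 0) := by
  have hm : Measurable (fun r : ℝ => (1 - Real.cos r) * r ^ (-1 - σ)) := by fun_prop
  rw [← Ioc_union_Ioi_eq_Ioi (zero_le_one (α := ℝ))]
  refine IntegrableOn.union ?_ ?_
  · have h : IntegrableOn (fun r : ℝ => r ^ (1 - σ)) (Ioc 0 1) :=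
      (intervalIntegrable_iff_integrableOn_Ioc_of_le zero_le_one).1
        (intervalIntegral.intervalIntegrable_rpow' (by linarith))
    refine Integrable.mono' h hm.aestronglyMeasurable ?_
    refine (ae_restrict_iff' measurableSet_Ioc).2 (ae_of_all _ fun r hr => ?_)
    have hp : 0 < r ^ (-1 - σ) := rpow_pos_of_pos hr.1 _
    have hc : 0 ≤ 1 - Real.cos r := sub_nonneg.2 (Real.cos_le_one r)
    rw [Real.norm_of_nonneg (by positivity), show (1 - σ) = 2 + (-1 - σ) by ring,
      rpow_add hr.1, rpow_two]
    gcongr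
    nlinarith [Real.one_sub_sq_div_two_le_cos (x := r), sq_nonneg r]
  · have h : IntegrableOn (fun r : ℝ => 2 * r ^ (-1 - σ)) (Ioi 1) :=
      (integrableOn_Ioi_rpow_of_lt (by linarith) one_pos).const_mul 2
    refine Integrable.mono' h hm.aestronglyMeasurable ?_
    refine (ae_restrict_iff' measurableSet_Ioi).2 (ae_of_all _ fun r hr => ?_)
    have hp : 0 < r ^ (-1 - σ) := rpow_pos_of_pos (one_pos.trans hr) _
    have hc : 0 ≤ 1 - Real.cos r := sub_nonneg.2 (Real.cos_le_one r)
    rw [Real.norm_of_nonneg (by positivity)]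
    gcongr
    linarith [Real.neg_one_le_cos r]

theorem integral_one_sub_cos_mul_rpow_pos {σ : ℝ} (hσ0 : 0 < σ) (hσ2 : σ < 2) :
    0 < ∫ r in Ioi (0 : ℝ), (1 - Real.cos r) * r ^ (-1 - σ) := by
  rw [setIntegral_pos_iff_support_of_nonneg_ae _ (integrableOn_one_sub_cos_mul_rpow hσ0 hσ2)]
  · have hsub : Ioo (0 : ℝ) 1 ⊆
        Function.support (fun r : ℝ => (1 - Real.cos r) * r ^ (-1 - σ)) ∩ Ioi 0 := by
      intro r hr
      refine ⟨?_, hr.1⟩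
      have hp : 0 < r ^ (-1 - σ) := rpow_pos_of_pos hr.1 _
      have hc : Real.cos r < 1 := by
        have := Real.cos_lt_cos_of_nonneg_of_le_pi le_rfl
          (hr.2.le.trans (by linarith [Real.pi_gt_three])) hr.1
        simpa using this
      exact (mul_pos (sub_pos.2 hc) hp).ne'
    refine lt_of_lt_of_le ?_ (measure_mono hsub)
    simp
  · refine (ae_restrict_iff' measurableSet_Ioi).2 (ae_of_all _ fun r hr => ?_)
    exact mul_nonneg (sub_nonneg.2 (Real.cos_le_one r)) (rpow_nonneg (le_of_lt hr) _)

theorem integral_one_sub_cos_mul_mul_rpow {σ : ℝ} (hσ0 : 0 < σ) (a : ℝ) :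
    ∫ r in Ioi (0 : ℝ), (1 - Real.cos (r * a)) * r ^ (-1 - σ) =
      |a| ^ σ * ∫ r in Ioi (0 : ℝ), (1 - Real.cos r) * r ^ (-1 - σ) := by
  rcases eq_or_ne a 0 with rfl | ha
  · simp [zero_rpow hσ0.ne']
  have ha' : 0 < |a| := abs_pos.2 ha
  have h := integral_comp_mul_left_Ioi
    (fun r : ℝ => (1 - Real.cos r) * r ^ (-1 - σ)) 0 ha'
  rw [mul_zero, smul_eq_mul] at h
  have h2 : ∫ r in Ioi (0 : ℝ), (1 - Real.cos (r * a)) * r ^ (-1 - σ) =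
      |a| ^ (1 + σ) * ∫ r in Ioi (0 : ℝ),
        (1 - Real.cos (|a| * r)) * (|a| * r) ^ (-1 - σ) := by
    rw [← integral_const_mul]
    refine setIntegral_congr_fun measurableSet_Ioi fun r hr => ?_
    have hcos : Real.cos (|a| * r) = Real.cos (r * a) := by
      rw [← Real.cos_abs (r * a), abs_mul, abs_of_pos (mem_Ioi.1 hr), mul_comm]
    have hpow : |a| ^ (1 + σ) * |a| ^ (-1 - σ) = 1 := by
      rw [← rpow_add ha']; ring_nf; exact rpow_zero _
    simp only [hcos, mul_rpow ha'.le (le_of_lt (mem_Ioi.1 hr))]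
    linear_combination (-(1 - Real.cos (r * a)) * r ^ (-1 - σ)) * hpow
  rw [h2, h, rpow_add ha', rpow_one]
  field_simp

theorem symb_eq (N : ℕ) {σ : ℝ} (hσ0 : 0 < σ) (μ : Measure (Sph N)) (ξ : Eu N) :
    symb N σ μ ξ = (∫ r in Ioi (0 : ℝ), (1 - Real.cos r) * r ^ (-1 - σ)) *
      ∫ θ : Sph N, |⟪ξ, (θ : Eu N)⟫_ℝ| ^ σ ∂μ := by
  simp only [symb, integral_one_sub_cos_mul_mul_rpow hσ0, integral_mul_const]
  exact mul_comm _ _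

theorem symb_smul (N : ℕ) {σ : ℝ} (hσ0 : 0 < σ) (μ : Measure (Sph N)) {t : ℝ} (ht : 0 ≤ t)
    (ξ : Eu N) : symb N σ μ (t • ξ) = t ^ σ * symb N σ μ ξ := by
  have h (θ : Sph N) : |⟪t • ξ, (θ : Eu N)⟫_ℝ| ^ σ = t ^ σ * |⟪ξ, (θ : Eu N)⟫_ℝ| ^ σ := by
    rw [real_inner_smul_left, abs_mul, abs_of_nonneg ht, mul_rpow ht (abs_nonneg _)]
  simp only [symb_eq N hσ0, h, integral_const_mul]
  ring

theorem measurable_symb (N : ℕ) {σ : ℝ} (hσ0 : 0 < σ) (μ : Measure (Sph N))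
    [IsFiniteMeasure μ] : Measurable (symb N σ μ) := by
  have h : StronglyMeasurable
      (fun p : Eu N × Sph N => |⟪p.1, (p.2 : Eu N)⟫_ℝ| ^ σ) := by
    refine Continuous.stronglyMeasurable ?_
    exact Continuous.rpow_const (by fun_prop) fun _ => Or.inr hσ0.le
  rw [funext (symb_eq N hσ0 μ)]
  exact h.integral_prod_right.measurable.const_mul _

theorem Elliptic.exists_le_symb {N : ℕ} {σ : ℝ} (hσ0 : 0 < σ) (hσ2 : σ < 2)
    {μ : Measure (Sph N)} {lam : ℝ} (hlam : 0 < lam) (hell : Elliptic N σ μ lam) :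
    ∃ c > 0, ∀ ξ : Eu N, c * ‖ξ‖ ^ σ ≤ symb N σ μ ξ := by
  have hK := integral_one_sub_cos_mul_rpow_pos hσ0 hσ2
  refine ⟨_, mul_pos hK hlam, fun ξ => ?_⟩
  rcases eq_or_ne ξ 0 with rfl | hξ
  · have h := symb_smul N hσ0 μ le_rfl (0 : Eu N)
    rw [zero_smul, zero_rpow hσ0.ne', zero_mul] at h
    simp [h, zero_rpow hσ0.ne']
  have hn : 0 < ‖ξ‖ := norm_pos_iff.2 hξ
  have hζ : ‖ξ‖⁻¹ • ξ ∈ sphere (0 : Eu N) 1 := by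
    rw [mem_sphere_zero_iff_norm, norm_smul, norm_inv, norm_norm, inv_mul_cancel₀ hn.ne']
  have h := symb_smul N hσ0 μ hn.le (‖ξ‖⁻¹ • ξ)
  rw [smul_inv_smul₀ hn.ne'] at h
  rw [h, symb_eq N hσ0, mul_comm]
  gcongr
  exact hell ⟨_, hζ⟩

theorem integrable_norm_rpow_mul_exp_neg {N : ℕ} (hN : 1 ≤ N) {σ c q : ℝ} (hσ0 : 0 < σ)
    (hc : 0 < c) (hq : 0 ≤ q) :
    Integrable (fun ξ : Eu N => ‖ξ‖ ^ q * Real.exp (-c * ‖ξ‖ ^ σ)) := by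
  have : Nonempty (Fin N) := ⟨⟨0, hN⟩⟩
  rw [integrable_fun_norm_addHaar (volume : Measure (Eu N))
    (f := fun y : ℝ => y ^ q * Real.exp (-c * y ^ σ))]
  have hs : -1 < ((Module.finrank ℝ (Eu N) - 1 : ℕ) : ℝ) + q := by
    have := Nat.cast_nonneg (α := ℝ) (Module.finrank ℝ (Eu N) - 1)
    linarith
  refine (integrableOn_rpow_mul_exp_neg_mul_rpow hs hσ0 hc).congr_fun (fun y hy => ?_)
    measurableSet_Ioi
  simp only [smul_eq_mul]
  rw [rpow_add hy, rpow_natCast, mul_assoc]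

/-- The real part of the Fourier integral of a real function is its cosine transform. -/
theorem LkPhi_eq_integral_cos {N : ℕ} {σ : ℝ} {μ : Measure (Sph N)} {k : ℕ}
    (h : Integrable (fun ξ => symb N σ μ ξ ^ k * Real.exp (-symb N σ μ ξ))) (x : Eu N) :
    LkPhi N σ μ k x = (2 * π) ^ (-(N : ℝ)) *
      ∫ ξ : Eu N, symb N σ μ ξ ^ k * Real.exp (-symb N σ μ ξ) * Real.cos ⟪x, ξ⟫_ℝ := by
  have hint : Integrable (fun ξ : Eu N =>
      ((symb N σ μ ξ ^ k * Real.exp (-symb N σ μ ξ) : ℝ) : ℂ) *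
        Complex.exp (Complex.I * (⟪x, ξ⟫_ℝ : ℂ))) := by
    refine h.ofReal.mul_bdd (c := 1) (by fun_prop) (ae_of_all _ fun ξ => ?_)
    rw [mul_comm, Complex.norm_exp_ofReal_mul_I]
  have hre := integral_re hint
  simp only [RCLike.re_eq_complex_re] at hre
  rw [LkPhi, ← hre]
  congr 2 with ξ
  rw [Complex.re_ofReal_mul, mul_comm Complex.I, Complex.exp_ofReal_mul_I_re]

/-- Differentiation under the cosine transform. -/
theorem differentiableAt_integral_mul_cos_inner {N : ℕ} {a : Eu N → ℝ} (ha : Integrable a)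
    (ha' : Integrable (fun ξ => ‖ξ‖ * a ξ)) (x : Eu N) :
    DifferentiableAt ℝ (fun y : Eu N => ∫ ξ, a ξ * Real.cos ⟪y, ξ⟫_ℝ) x := by
  have hm (y : Eu N) : AEStronglyMeasurable (fun ξ => a ξ * Real.cos ⟪y, ξ⟫_ℝ) volume :=
    ha.aestronglyMeasurable.mul (by fun_prop)
  refine (hasFDerivAt_integral_of_dominated_of_fderiv_le (s := univ)
    (F' := fun y ξ => a ξ • (-Real.sin ⟪y, ξ⟫_ℝ) • innerSL ℝ ξ)
    (bound := fun ξ => ‖‖ξ‖ * a ξ‖) Filter.univ_mem (Filter.Eventually.of_forall hm)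
    ?_ ?_ ?_ ha'.norm ?_).differentiableAt
  · refine ha.mul_bdd (c := 1) (by fun_prop) (ae_of_all _ fun ξ => ?_)
    exact Real.abs_cos_le_one _
  · exact ha.aestronglyMeasurable.smul (by fun_prop)
  · refine ae_of_all _ fun ξ y _ => ?_
    rw [norm_smul, norm_smul, innerSL_apply_norm, norm_mul, norm_norm, norm_neg, mul_comm]
    have h1 : ‖Real.sin ⟪y, ξ⟫_ℝ‖ ≤ 1 := Real.abs_sin_le_one _
    have h2 : ‖Real.sin ⟪y, ξ⟫_ℝ‖ * ‖ξ‖ ≤ ‖ξ‖ := mul_le_of_le_one_left (norm_nonneg _) h1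
    gcongr
  · refine ae_of_all _ fun ξ y _ => ?_
    have h : HasFDerivAt (fun y : Eu N => ⟪y, ξ⟫_ℝ) (innerSL ℝ ξ) y := by
      refine (innerSL ℝ ξ).hasFDerivAt.congr_of_eventuallyEq (.of_forall fun z => ?_)
      rw [innerSL_apply_apply, real_inner_comm]
    exact (h.cos).const_mul (a ξ)

theorem mul_exp_neg_half_le {s : ℝ} : s * Real.exp (-(s / 2)) ≤ 4 * Real.exp (-(s / 4)) := by
  have h : Real.exp (-(s / 4)) = Real.exp (s / 4) * Real.exp (-(s / 2)) := by
    rw [← Real.exp_add]; ring_nf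
  rw [h, ← mul_assoc]
  gcongr
  linarith [Real.add_one_le_exp (s / 4)]

/-- Differentiation in time of `s ↦ ∫ e^{-s m(ξ)} b(ξ) dξ` at `s = 1`. -/
theorem hasDerivAt_integral_exp_neg_mul {N : ℕ} {m b : Eu N → ℝ} (hm : Measurable m)
    (hm0 : ∀ ξ, 0 ≤ m ξ) (hb : Measurable b) (hb1 : ∀ ξ, |b ξ| ≤ 1)
    (hexp : ∀ c > 0, Integrable (fun ξ => Real.exp (-(c * m ξ)))) :
    HasDerivAt (fun s : ℝ => ∫ ξ, Real.exp (-(s * m ξ)) * b ξ)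
      (∫ ξ, -(m ξ * Real.exp (-m ξ) * b ξ)) 1 := by
  have key := hasDerivAt_integral_of_dominated_loc_of_deriv_le (μ := (volume : Measure (Eu N)))
    (F := fun (s : ℝ) ξ => Real.exp (-(s * m ξ)) * b ξ) (x₀ := 1) (s := Ioi (1 / 2))
    (F' := fun (s : ℝ) ξ => -(m ξ * Real.exp (-(s * m ξ)) * b ξ))
    (bound := fun ξ => 4 * Real.exp (-(1 / 4 * m ξ)))
    (Ioi_mem_nhds (by norm_num))
    (Filter.Eventually.of_forall fun s => by fun_prop)
    ?_ (by fun_prop) ?_ ((hexp _ (by norm_num)).const_mul 4) ?_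
  · simpa using key.2
  · exact (hexp 1 one_pos).mul_bdd (c := 1) hb.aestronglyMeasurable (ae_of_all _ hb1)
  · refine ae_of_all _ fun ξ s hs => ?_
    have hs' : 1 / 2 < s := hs
    rw [norm_neg, norm_mul, Real.norm_of_nonneg (mul_nonneg (hm0 ξ) (Real.exp_pos _).le)]
    calc m ξ * Real.exp (-(s * m ξ)) * ‖b ξ‖
        ≤ m ξ * Real.exp (-(m ξ / 2)) * 1 := by
          have := hm0 ξ
          gcongr
          · nlinarith
          · exact hb1 ξ
      _ ≤ 4 * Real.exp (-(1 / 4 * m ξ)) := by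
          rw [mul_one, one_div_mul_eq_div]
          exact mul_exp_neg_half_le
  · refine ae_of_all _ fun ξ s _ => ?_
    have h : HasDerivAt (fun s : ℝ => -(s * m ξ)) (-m ξ) s := by
      simpa using ((hasDerivAt_id s).mul_const (m ξ)).fun_neg
    exact (h.exp.mul_const (b ξ)).congr_deriv (by ring)

/-- The equation satisfied by the profile:
`σ 𝓛Φ(x) = N Φ(x) + x·∇Φ(x)`. -/
theorem stmt18 (N : ℕ) (hN : 1 ≤ N) (σ : ℝ) (hσ0 : 0 < σ) (hσ2 : σ < 2)
    (μ : Measure (Sph N)) [IsFiniteMeasure μ]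
    (lam : ℝ) (hlam : 0 < lam) (hell : Elliptic N σ μ lam) (x : Eu N) :
    σ * LkPhi N σ μ 1 x = N * LkPhi N σ μ 0 x + fderiv ℝ (LkPhi N σ μ 0) x x := by
  obtain ⟨c, hc, hle⟩ := hell.exists_le_symb hσ0 hσ2 hlam
  have hm : Measurable (symb N σ μ) := measurable_symb N hσ0 μ
  have hm0 (ξ : Eu N) : 0 ≤ symb N σ μ ξ := le_trans (by positivity) (hle ξ)
  have hdecay (q : ℝ) (hq : 0 ≤ q) (d : ℝ) (hd : 0 < d) :
      Integrable (fun ξ => ‖ξ‖ ^ q * Real.exp (-(d * symb N σ μ ξ))) := by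
    refine (integrable_norm_rpow_mul_exp_neg hN hσ0 (mul_pos hd hc) hq).mono'
      (by fun_prop) (ae_of_all _ fun ξ => ?_)
    rw [Real.norm_of_nonneg (by positivity)]
    gcongr
    rw [neg_mul, neg_le_neg_iff, mul_assoc]
    gcongr
    exact hle ξ
  have hexp (d : ℝ) (hd : 0 < d) : Integrable (fun ξ => Real.exp (-(d * symb N σ μ ξ))) := by
    simpa using hdecay 0 le_rfl d hd
  have hexp1 : Integrable (fun ξ => Real.exp (-symb N σ μ ξ)) := by simpa using hexp 1 one_pos
  have hI1 : Integrable (fun ξ => symb N σ μ ξ ^ 1 * Real.exp (-symb N σ μ ξ)) := by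
    refine ((hexp (1 / 4) (by norm_num)).const_mul 4).mono' (by fun_prop) (ae_of_all _ fun ξ => ?_)
    have := hm0 ξ
    rw [Real.norm_of_nonneg (by positivity), pow_one, one_div_mul_eq_div]
    refine le_trans ?_ mul_exp_neg_half_le
    gcongr
    linarith
  have hI0 : Integrable (fun ξ => symb N σ μ ξ ^ 0 * Real.exp (-symb N σ μ ξ)) := by
    simpa using hexp1
  set G : Eu N → ℝ := fun y => ∫ ξ, Real.exp (-symb N σ μ ξ) * Real.cos ⟪y, ξ⟫_ℝ with hG
  have hG_diff : DifferentiableAt ℝ G x :=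
    differentiableAt_integral_mul_cos_inner hexp1 (by simpa using hdecay 1 zero_le_one 1 one_pos) x
  have hPhi : LkPhi N σ μ 0 = fun y => (2 * π) ^ (-(N : ℝ)) * G y := by
    funext y
    simp only [LkPhi_eq_integral_cos hI0, hG, pow_zero, one_mul]
  have hscale (t : ℝ) (ht : 0 < t) :
      ∫ ξ, Real.exp (-(t ^ σ * symb N σ μ ξ)) * Real.cos ⟪x, ξ⟫_ℝ =
        (t ^ N)⁻¹ * G (t⁻¹ • x) := by
    have h := Measure.integral_comp_smul (volume : Measure (Eu N))
      (fun η => Real.exp (-symb N σ μ η) * Real.cos ⟪t⁻¹ • x, η⟫_ℝ) t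
    rw [finrank_euclideanSpace_fin, abs_of_pos (by positivity), smul_eq_mul] at h
    rw [hG, ← h]
    congr 1 with ξ
    rw [symb_smul N hσ0 μ ht.le, real_inner_smul_left, real_inner_smul_right,
      inv_mul_cancel_left₀ ht.ne']
  have hleft : HasDerivAt
      (fun t : ℝ => ∫ ξ, Real.exp (-(t ^ σ * symb N σ μ ξ)) * Real.cos ⟪x, ξ⟫_ℝ)
      ((∫ ξ, -(symb N σ μ ξ * Real.exp (-symb N σ μ ξ) * Real.cos ⟪x, ξ⟫_ℝ)) * σ) 1 := by
    have h1 := hasDerivAt_integral_exp_neg_mul (b := fun ξ => Real.cos ⟪x, ξ⟫_ℝ) hm hm0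
      (by fun_prop) (fun ξ => Real.abs_cos_le_one _) hexp
    have h2 : HasDerivAt (fun t : ℝ => t ^ σ) σ 1 := by
      simpa using Real.hasDerivAt_rpow_const (x := 1) (p := σ) (Or.inl one_ne_zero)
    exact HasDerivAt.comp (h₂ := fun s : ℝ =>
      ∫ ξ, Real.exp (-(s * symb N σ μ ξ)) * Real.cos ⟪x, ξ⟫_ℝ) 1 (by simpa using h1) h2
  have hright : HasDerivAt (fun t : ℝ => (t ^ N)⁻¹ * G (t⁻¹ • x))
      (-N * G x - fderiv ℝ G x x) 1 := by
    have h1 : HasDerivAt (fun t : ℝ => (t ^ N)⁻¹) (-N) 1 := by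
      simpa using (hasDerivAt_pow N (1 : ℝ)).fun_inv (by simp)
    have h2 : HasDerivAt (fun t : ℝ => t⁻¹ • x) (-x) 1 := by
      simpa using (hasDerivAt_inv (one_ne_zero (α := ℝ))).smul_const x
    have h3 : HasFDerivAt G (fderiv ℝ G x) ((1 : ℝ)⁻¹ • x) := by
      simpa using hG_diff.hasFDerivAt
    have h4 : HasDerivAt (fun t : ℝ => G (t⁻¹ • x)) (fderiv ℝ G x (-x)) 1 :=
      HasFDerivAt.comp_hasDerivAt (l := G) (f := fun t : ℝ => t⁻¹ • x) 1 h3 h2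
    refine (h1.fun_mul h4).congr_deriv ?_
    simp only [inv_one, one_smul, one_pow, one_mul, map_neg]
    ring
  have huniq := (hleft.congr_of_eventuallyEq
    (Filter.mem_of_superset (Ioi_mem_nhds one_pos) fun t ht => (hscale t ht).symm)).unique hright
  rw [integral_neg] at huniq
  rw [LkPhi_eq_integral_cos hI1, hPhi, fderiv_const_mul hG_diff]
  simp only [pow_one, smul_apply, smul_eq_mul]
  linear_combination (-(2 * π) ^ (-(N : ℝ))) * huniq
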